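/- arXiv:1212.1387 — 2 statements merged into one kernel-verified Lean document; each statement's English description precedes it below -/
import Mathlib

section
/- Every SK-matrix A is a τ^<-matrix: l(A) > 0, every principal submatrix of A has a real eigenvalue, and l(A(α)) < l(A(β)) < ∞ whenever ∅ ≠ β ⊊ α ⊆ {1,…,n}. -/
open Matrix

/-- The minor of the matrix `A` on the row set `α` and the column set `β`
(rows and columns taken in increasing order); junk value `0` if the
cardinalities of `α` and `β` differ. -/
noncomputable def minorOn {n : ℕ} (A : Matrix (Fin n) (Fin n) ℝ)
    (α β : Finset (Fin n)) : ℝ :=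
  if h : β.card = α.card then
    (A.submatrix (⇑(α.orderEmbOfFin rfl)) (⇑(β.orderEmbOfFin h))).det
  else 0

/-- The principal submatrix `A(α)` of `A` on the index set `α`. -/
def psub {n : ℕ} (A : Matrix (Fin n) (Fin n) ℝ) (α : Finset (Fin n)) :
    Matrix (Fin α.card) (Fin α.card) ℝ :=
  A.submatrix (⇑(α.orderEmbOfFin rfl)) (⇑(α.orderEmbOfFin rfl))

/-- `A` is a Kotelyansky (K) matrix: all principal minors are positive and all
almost principal minors are nonnegative. -/
def IsK {n : ℕ} (A : Matrix (Fin n) (Fin n) ℝ) : Prop :=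
  (∀ α : Finset (Fin n), α.Nonempty → 0 < minorOn A α α) ∧
  (∀ (α : Finset (Fin n)) (r s : Fin n), r ∈ α → s ∈ α → r ≠ s →
    0 ≤ minorOn A (α.erase r) (α.erase s))

/-- `A` is a strictly Kotelyansky (SK) matrix: all principal minors and all
almost principal minors are positive. -/
def IsSK {n : ℕ} (A : Matrix (Fin n) (Fin n) ℝ) : Prop :=
  (∀ α : Finset (Fin n), α.Nonempty → 0 < minorOn A α α) ∧
  (∀ (α : Finset (Fin n)) (r s : Fin n), r ∈ α → s ∈ α → r ≠ s →
    0 < minorOn A (α.erase r) (α.erase s))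

/-- The `j`-th compound matrix of `A`: the matrix of all `j×j` minors of `A`,
indexed by the `j`-element subsets of the index set. -/
noncomputable def compound {m : ℕ} (A : Matrix (Fin m) (Fin m) ℝ) (j : ℕ) :
    Matrix {s : Finset (Fin m) // s.card = j} {s : Finset (Fin m) // s.card = j} ℝ :=
  fun s t => minorOn A s.1 t.1

/-- `A` is J-sign-symmetric for the subset `J` of its index set. -/
def IsJS {ι : Type*} (J : Set ι) (A : Matrix ι ι ℝ) : Prop :=
  (∀ i j, ((i ∈ J ∧ j ∈ J) ∨ (i ∉ J ∧ j ∉ J)) → 0 ≤ A i j) ∧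
  (∀ i j, ((i ∈ J ∧ j ∉ J) ∨ (i ∉ J ∧ j ∈ J)) → A i j ≤ 0)

/-- `A` is strictly J-sign-symmetric: J-sign-symmetric with no zero entries. -/
def IsSJS {ι : Type*} (J : Set ι) (A : Matrix ι ι ℝ) : Prop :=
  IsJS J A ∧ ∀ i j, A i j ≠ 0

/-- `A` is strictly totally J-sign-symmetric: every compound matrix `A^(j)`,
`1 ≤ j ≤ n`, is strictly J-sign-symmetric for some subset of its index set. -/
def IsSTJS {n : ℕ} (A : Matrix (Fin n) (Fin n) ℝ) : Prop :=
  ∀ j, 1 ≤ j → j ≤ n →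
    ∃ J : Set {s : Finset (Fin n) // s.card = j}, IsSJS J (compound A j)

/-- `A` is J-sign-symmetric Kotelyansky (JSK). -/
def IsJSK {n : ℕ} (A : Matrix (Fin n) (Fin n) ℝ) : Prop :=
  (∀ α : Finset (Fin n), α.Nonempty → 0 < minorOn A α α) ∧
  ∀ α : Finset (Fin n), 2 ≤ α.card →
    ∃ J : Set {s : Finset (Fin α.card) // s.card = α.card - 1},
      IsJS J (compound (psub A α) (α.card - 1))

/-- `A` is strictly J-sign-symmetric Kotelyansky (SJSK). -/
def IsSJSK {n : ℕ} (A : Matrix (Fin n) (Fin n) ℝ) : Prop :=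
  0 < A.det ∧
  ∀ α : Finset (Fin n), 2 ≤ α.card →
    ∃ J : Set {s : Finset (Fin α.card) // s.card = α.card - 1},
      IsSJS J (compound (psub A α) (α.card - 1))

/-- `l(B)`: the smallest real eigenvalue of `B`, or `∞` (`⊤` in `EReal`) if `B`
has no real eigenvalues. -/
noncomputable def lval {m : ℕ} (B : Matrix (Fin m) (Fin m) ℝ) : EReal :=
  sInf (insert (⊤ : EReal) ((fun t : ℝ => (t : EReal)) '' {t : ℝ | B.charpoly.IsRoot t}))

/-!
Let `D` be the diagonal matrix of signs `(-1) ^ i`. By Cramer's rule the inverse `B` of `D * A * D`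
is entrywise positive, so its Perron vector `x`, with eigenvalue `ρ`, shows that `ρ⁻¹` is an
eigenvalue of `A`. Let `μ > 0` be an eigenvalue of the principal submatrix obtained by deleting `k`,
and let `y` be the eigenvector extended by `0` at `k`, after conjugation by `D`. Then
`y - μ • B *ᵥ y` is a multiple of the `k`-th column of `B`, hence of constant sign; if `μ ≤ ρ⁻¹`,
comparing `±y` with `x` forces `y = 0`. So deleting an index strictly raises the smallest
eigenvalue, all real eigenvalues being positive because the coefficients of the characteristic
polynomial are, up to alternating signs, sums of principal minors.
-/

section PositiveMatrix

variable {ι κ R K : Type*} [Fintype ι]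

lemma mulVec_pos [Semiring R] [PartialOrder R] [IsStrictOrderedRing R] {B : Matrix κ ι R}
    (hB : ∀ i j, 0 < B i j) {x : ι → R} (hx : 0 < x) (i : κ) : 0 < (B *ᵥ x) i := by
  obtain ⟨hx, j, hj⟩ := Pi.lt_def.1 hx
  exact Finset.sum_pos' (fun l _ ↦ mul_nonneg (hB i l).le (hx l))
    ⟨j, Finset.mem_univ j, mul_pos (hB i j) hj⟩

/- If `s` is least with `0 ≤ y + s • x`, this sum also satisfies the inequality and vanishes at
some index, so it is zero. -/
theorem eq_zero_of_smul_mulVec_le [Field K] [LinearOrder K] [IsStrictOrderedRing K]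
    {B : Matrix ι ι K} (hB : ∀ i j, 0 < B i j) {x : ι → K} (hx : ∀ i, 0 < x i) {μ : K}
    (hμ : 0 < μ) (hμx : μ • (B *ᵥ x) ≤ x) {y : ι → K} (hμy : μ • (B *ᵥ y) ≤ y) {k : ι}
    (hyk : y k = 0) : y = 0 := by
  have : Nonempty ι := ⟨k⟩
  obtain ⟨i, hi⟩ := Finite.exists_max fun j ↦ -y j / x j
  set s := -y i / x i with hs_def
  have hs : 0 ≤ s := by simpa [hyk] using hi k
  have hsum_nonneg : 0 ≤ y + s • x := fun j ↦ by
    have := (div_le_iff₀ (hx j)).1 (hi j)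
    simpa using neg_le_iff_add_nonneg'.1 this
  have hsum_i : (y + s • x) i = 0 := by
    simp [hs_def, div_mul_cancel₀ _ (hx i).ne']
  have hsum_le : μ • (B *ᵥ (y + s • x)) ≤ y + s • x := by
    rw [mulVec_add, mulVec_smul, smul_add, smul_comm μ s]
    exact add_le_add hμy (smul_le_smul_of_nonneg_left hμx hs)
  have hsum : y + s • x = 0 := by
    by_contra hne
    have hBi := mulVec_pos hB (lt_of_le_of_ne hsum_nonneg (Ne.symm hne)) i
    exact ((mul_pos hμ hBi).trans_le (hsum_le i)).ne' hsum_i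
  have hs0 : s = 0 := by simpa [hyk, (hx k).ne'] using congrFun hsum k
  simpa [hs0] using hsum

variable [Field K] [LinearOrder K]

/-- The Collatz–Wielandt number `minᵢ (B x)ᵢ / xᵢ` of the matrix `B` at the vector `x`, the
largest `r` with `r • x ≤ B *ᵥ x` when `x` is entrywise positive. Its maximum over positive
vectors is the Perron root of `B`. -/
noncomputable def collatzWielandt [Nonempty ι] (B : Matrix ι ι K) (x : ι → K) : K :=
  Finset.univ.inf' Finset.univ_nonempty fun i ↦ (B *ᵥ x) i / x i

lemma collatzWielandt_smul [Nonempty ι] (B : Matrix ι ι K) (x : ι → K) {c : K} (hc : c ≠ 0) :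
    collatzWielandt B (c • x) = collatzWielandt B x := by
  simp only [collatzWielandt, mulVec_smul, Pi.smul_apply, smul_eq_mul, mul_div_mul_left _ _ hc]

variable [IsStrictOrderedRing K] [Nonempty ι] {B : Matrix ι ι K} {x : ι → K}

lemma collatzWielandt_smul_le (hx : ∀ i, 0 < x i) : collatzWielandt B x • x ≤ B *ᵥ x :=
  fun i ↦ (le_div_iff₀ (hx i)).1 (Finset.inf'_le _ (Finset.mem_univ i))

lemma lt_collatzWielandt_iff (hx : ∀ i, 0 < x i) {r : K} :
    r < collatzWielandt B x ↔ ∀ i, r * x i < (B *ᵥ x) i := by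
  simp only [collatzWielandt, Finset.lt_inf'_iff, Finset.mem_univ, true_implies,
    lt_div_iff₀ (hx _)]

lemma collatzWielandt_lt_mulVec (hB : ∀ i j, 0 < B i j) (hx : ∀ i, 0 < x i)
    (hne : collatzWielandt B x • x ≠ B *ᵥ x) :
    collatzWielandt B x < collatzWielandt B (B *ᵥ x) := by
  have hlt : collatzWielandt B x • x < B *ᵥ x := (collatzWielandt_smul_le hx).lt_of_ne hne
  have hx0 : 0 < x := Pi.lt_def.2 ⟨fun i ↦ (hx i).le, Classical.arbitrary ι, hx _⟩
  refine (lt_collatzWielandt_iff (mulVec_pos hB hx0)).2 fun i ↦ ?_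
  simpa [mulVec_sub, mulVec_smul] using mulVec_pos hB (sub_pos.2 hlt) i

lemma continuousOn_collatzWielandt (B : Matrix ι ι ℝ) :
    ContinuousOn (collatzWielandt B) {x | ∀ i, 0 < x i} :=
  ContinuousOn.finset_inf'_apply _ fun i _ ↦
    ((continuous_apply i).comp (continuous_const.matrix_mulVec continuous_id)).continuousOn.div
      (continuous_apply i).continuousOn fun _ hx ↦ (hx i).ne'

theorem exists_pos_eigenvector {B : Matrix ι ι ℝ} (hB : ∀ i j, 0 < B i j) :
    ∃ (ρ : ℝ) (x : ι → ℝ), 0 < ρ ∧ (∀ i, 0 < x i) ∧ B *ᵥ x = ρ • x := by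
  classical
  have hpos : ∀ z ∈ stdSimplex ℝ ι, ∀ i, 0 < (B *ᵥ z) i := fun z hz ↦
    mulVec_pos hB <| lt_of_le_of_ne hz.1 fun h ↦ by simpa [← h] using hz.2
  obtain ⟨z, hz, hmax⟩ := (isCompact_stdSimplex ℝ ι).exists_isMaxOn
    ⟨_, single_mem_stdSimplex ℝ (Classical.arbitrary ι)⟩
    ((continuousOn_collatzWielandt B).comp
      (continuous_const.matrix_mulVec continuous_id).continuousOn hpos)
  set y := B *ᵥ z
  have hy : ∀ i, 0 < y i := hpos z hz
  have hsum : 0 < ∑ i, y i := Finset.sum_pos (fun i _ ↦ hy i) Finset.univ_nonempty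
  have hscaled : (∑ i, y i)⁻¹ • y ∈ stdSimplex ℝ ι :=
    ⟨fun i ↦ mul_nonneg (inv_nonneg.2 hsum.le) (hy i).le, by
      simp only [Pi.smul_apply, smul_eq_mul, ← Finset.mul_sum, inv_mul_cancel₀ hsum.ne']⟩
  have heig : collatzWielandt B y • y = B *ᵥ y := by
    by_contra hne
    have hle : collatzWielandt B (B *ᵥ ((∑ i, y i)⁻¹ • y)) ≤ collatzWielandt B y := hmax hscaled
    rw [mulVec_smul, collatzWielandt_smul _ _ (inv_ne_zero hsum.ne')] at hle
    exact hle.not_gt (collatzWielandt_lt_mulVec hB hy hne)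
  refine ⟨collatzWielandt B y, y, (lt_collatzWielandt_iff hy).2 fun i ↦ ?_, hy, heig.symm⟩
  rw [zero_mul]
  exact mulVec_pos hB (Pi.lt_def.2 ⟨fun j ↦ (hy j).le, i, hy i⟩) i

end PositiveMatrix

section Charpoly

variable {ι κ R : Type*} [Fintype ι] [Fintype κ]

lemma submatrix_mulVec_eq_mulVec_extend [NonUnitalNonAssocSemiring R] {m n : Type*}
    (A : Matrix m ι R) (g : n → m) {f : κ → ι} (hf : Function.Injective f) (v : κ → R) :
    A.submatrix g f *ᵥ v = (A *ᵥ Function.extend f v 0) ∘ g := by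
  ext j
  refine Fintype.sum_of_injective f hf _ _ (fun i hi ↦ ?_) fun i ↦ ?_
  · simp [Function.extend_apply' v _ i hi]
  · simp [hf.extend_apply]

variable [DecidableEq ι] [DecidableEq κ]

lemma isRoot_charpoly_iff_exists_mulVec [CommRing R] [IsDomain R] {A : Matrix ι ι R} {t : R} :
    A.charpoly.IsRoot t ↔ ∃ v ≠ 0, A *ᵥ v = t • v := by
  rw [Polynomial.IsRoot.def, eval_charpoly, ← exists_mulVec_eq_zero_iff]
  simp only [sub_mulVec, sub_eq_zero, scalar_apply, ← smul_one_eq_diagonal, smul_mulVec,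
    one_mulVec, eq_comm]

section Ordered

variable [CommRing R] [LinearOrder R] [IsStrictOrderedRing R]

lemma coeff_charpoly_neg_pos {A : Matrix ι ι R}
    (hA : ∀ s : Finset ι, 0 < (A.submatrix ((↑) : s → ι) (↑)).det) {k : ℕ}
    (hk : k ≤ Fintype.card ι) : 0 < (-A).charpoly.coeff k := by
  rw [← Nat.sub_sub_self hk, charpoly_coeff_eq_sum_minors _ _ (Nat.sub_le _ _), Finset.mul_sum]
  refine Finset.sum_pos (fun s hs ↦ ?_) (Finset.powersetCard_nonempty.2 (by simp))
  have hneg : ((-A).submatrix ((↑) : s → ι) (↑)).det =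
      (-1) ^ (Fintype.card ι - k) * (A.submatrix ((↑) : s → ι) (↑)).det := by
    rw [← (Finset.mem_powersetCard.1 hs).2, ← Fintype.card_coe s]
    exact det_neg _
  rw [hneg, ← mul_assoc, ← mul_pow]
  simpa using hA s

theorem pos_of_isRoot_charpoly {A : Matrix ι ι R}
    (hA : ∀ s : Finset ι, 0 < (A.submatrix ((↑) : s → ι) (↑)).det) {t : R}
    (ht : A.charpoly.IsRoot t) : 0 < t := by
  by_contra! hnonpos
  have hroot : (-A).charpoly.IsRoot (-t) := by
    obtain ⟨v, hv, hAv⟩ := isRoot_charpoly_iff_exists_mulVec.1 ht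
    exact isRoot_charpoly_iff_exists_mulVec.2 ⟨v, hv, by rw [neg_mulVec, hAv, neg_smul]⟩
  have heval : 0 < (-A).charpoly.eval (-t) := by
    rw [Polynomial.eval_eq_sum_range, charpoly_natDegree_eq_dim]
    refine Finset.sum_pos' (fun k hk ↦ ?_) ⟨0, by simp, ?_⟩
    · exact mul_nonneg (coeff_charpoly_neg_pos hA (Finset.mem_range_succ_iff.1 hk)).le
        (pow_nonneg (neg_nonneg.2 hnonpos) k)
    · simpa using coeff_charpoly_neg_pos hA (Nat.zero_le _)
  exact heval.ne' hroot

end Ordered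

lemma exists_mulVec_eq_smul_add_single [CommRing R] [IsDomain R] {A : Matrix ι ι R} {k : ι}
    {f : κ → ι} (hf : Function.Injective f) (hfk : Set.range f = {k}ᶜ) {μ : R}
    (hμ : (A.submatrix f f).charpoly.IsRoot μ) :
    ∃ y ≠ 0, y k = 0 ∧ ∃ c : R, A *ᵥ y = μ • y + Pi.single k c := by
  obtain ⟨v, hv, hAv⟩ := isRoot_charpoly_iff_exists_mulVec.1 hμ
  rw [submatrix_mulVec_eq_mulVec_extend _ _ hf] at hAv
  have hk : ¬∃ j, f j = k := by simp [← Set.mem_range, hfk]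
  have hyk : Function.extend f v 0 k = 0 := Function.extend_apply' v _ k hk
  refine ⟨Function.extend f v 0, fun h ↦ hv ?_, hyk, (A *ᵥ Function.extend f v 0) k, ?_⟩
  · rw [← Function.extend_comp hf v 0, h, Pi.zero_comp]
  · ext i
    obtain rfl | hik := eq_or_ne i k
    · simp [hyk]
    · obtain ⟨j, rfl⟩ : i ∈ Set.range f := by simpa [hfk] using hik
      simpa [hf.extend_apply, hik] using congrFun hAv j

theorem inv_lt_of_isRoot_charpoly_submatrix [Field R] [LinearOrder R] [IsStrictOrderedRing R]
    {B C : Matrix ι ι R} (hB : ∀ i j, 0 < B i j) (hBC : B * C = 1) {ρ : R} (hρ : 0 < ρ)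
    {x : ι → R} (hx : ∀ i, 0 < x i) (hBx : B *ᵥ x = ρ • x) {k : ι} {f : κ → ι}
    (hf : Function.Injective f) (hfk : Set.range f = {k}ᶜ) {μ : R} (hμ : 0 < μ)
    (hroot : (C.submatrix f f).charpoly.IsRoot μ) : ρ⁻¹ < μ := by
  by_contra! hle
  have hμx : μ • (B *ᵥ x) ≤ x := fun i ↦ by
    have hμρ : μ * ρ ≤ 1 := (le_div_iff₀ hρ).1 (by rwa [one_div])
    simpa [hBx, ← mul_assoc] using mul_le_of_le_one_left (hx i).le hμρ
  obtain ⟨y, hy, hyk, c, hCy⟩ := exists_mulVec_eq_smul_add_single hf hfk hroot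
  have hBy : y - μ • (B *ᵥ y) = c • B.col k := by
    have hy_eq : y = μ • (B *ᵥ y) + c • B.col k := calc
      y = B *ᵥ (C *ᵥ y) := by rw [mulVec_mulVec, hBC, one_mulVec]
      _ = μ • (B *ᵥ y) + c • B.col k := by
        rw [hCy, mulVec_add, mulVec_smul, mulVec_single, op_smul_eq_smul]
    exact sub_eq_iff_eq_add'.2 hy_eq
  have hcol : 0 ≤ B.col k := fun i ↦ (hB i k).le
  obtain hc | hc := le_total 0 c
  · exact hy <| eq_zero_of_smul_mulVec_le hB hx hμ hμx
      (sub_nonneg.1 (hBy ▸ smul_nonneg hc hcol)) hyk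
  · refine hy <| neg_eq_zero.1 <| eq_zero_of_smul_mulVec_le hB hx hμ hμx
      (y := -y) (k := k) ?_ (by simp [hyk])
    rw [mulVec_neg, smul_neg, neg_le_neg_iff, ← sub_nonpos, hBy]
    exact smul_nonpos_of_nonpos_of_nonneg hc hcol

end Charpoly

section SignConjugation

variable {ι κ R : Type*} [Fintype ι] [DecidableEq ι]

lemma submatrix_diagonal_mul_mul_diagonal [NonUnitalNonAssocSemiring R]
    [Fintype κ] [DecidableEq κ] (d : ι → R) (A : Matrix ι ι R) (f : κ → ι) :
    (diagonal d * A * diagonal d).submatrix f f =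
      diagonal (d ∘ f) * A.submatrix f f * diagonal (d ∘ f) := by
  ext i j
  simp

lemma charpoly_diagonal_mul_mul_diagonal [CommRing R] {d : ι → R}
    (hd : ∀ i, d i * d i = 1) (A : Matrix ι ι R) :
    (diagonal d * A * diagonal d).charpoly = A.charpoly := by
  rw [charpoly_mul_comm, ← Matrix.mul_assoc, diagonal_mul_diagonal]
  simp [hd]

lemma diagonal_mul_inv_mul_diagonal_apply {K : Type*} [Field K] {m : ℕ}
    (A : Matrix (Fin (m + 1)) (Fin (m + 1)) K) (i j : Fin (m + 1)) :
    (diagonal (fun l : Fin (m + 1) ↦ (-1 : K) ^ (l : ℕ)) * A⁻¹ *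
      diagonal (fun l : Fin (m + 1) ↦ (-1 : K) ^ (l : ℕ)) : Matrix _ _ K) i j =
      A.det⁻¹ * (A.submatrix j.succAbove i.succAbove).det := by
  have hsign : ((-1 : K) ^ (i : ℕ) * (-1) ^ (j : ℕ)) * (-1) ^ ((j : ℕ) + i) = 1 := by
    rw [← pow_add, add_comm (j : ℕ), ← mul_pow]
    simp
  rw [mul_diagonal, diagonal_mul, inv_def, Matrix.smul_apply, adjugate_fin_succ_eq_det_submatrix,
    Ring.inverse_eq_inv, smul_eq_mul]
  linear_combination A.det⁻¹ * (A.submatrix j.succAbove i.succAbove).det * hsign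

end SignConjugation

theorem exists_isRoot_charpoly_lt_of_minors_pos {m : ℕ} {A : Matrix (Fin (m + 1)) (Fin (m + 1)) ℝ}
    (hdet : 0 < A.det)
    (hminor : ∀ i j : Fin (m + 1), 0 < (A.submatrix i.succAbove j.succAbove).det) :
    ∃ t, A.charpoly.IsRoot t ∧ ∀ (k : Fin (m + 1)) (μ : ℝ), 0 < μ →
      (A.submatrix k.succAbove k.succAbove).charpoly.IsRoot μ → t < μ := by
  set d : Fin (m + 1) → ℝ := fun i ↦ (-1) ^ (i : ℕ)
  have hd : ∀ i, d i * d i = 1 := fun i ↦ by simp [d, ← mul_pow]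
  have hdd : diagonal d * diagonal d = 1 := by simp [diagonal_mul_diagonal, hd]
  set B := diagonal d * A⁻¹ * diagonal d with hB_def
  set C := diagonal d * A * diagonal d with hC_def
  have hB : ∀ i j, 0 < B i j := fun i j ↦ by
    rw [hB_def, diagonal_mul_inv_mul_diagonal_apply]
    exact mul_pos (inv_pos.2 hdet) (hminor j i)
  have hBC : B * C = 1 := calc
    B * C = diagonal d * (A⁻¹ * (diagonal d * diagonal d * A)) * diagonal d := by
      simp only [hB_def, hC_def, Matrix.mul_assoc]
    _ = 1 := by rw [hdd, Matrix.one_mul, nonsing_inv_mul _ hdet.ne'.isUnit, Matrix.mul_one, hdd]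
  obtain ⟨ρ, x, hρ, hx, hBx⟩ := exists_pos_eigenvector hB
  have hCx : C *ᵥ x = ρ⁻¹ • x := by
    rw [eq_inv_smul_iff₀ hρ.ne', ← mulVec_smul, ← hBx, mulVec_mulVec, mul_eq_one_comm.1 hBC,
      one_mulVec]
  refine ⟨ρ⁻¹, ?_, fun k μ hμ hroot ↦ ?_⟩
  · rw [← charpoly_diagonal_mul_mul_diagonal hd]
    exact isRoot_charpoly_iff_exists_mulVec.2 ⟨x, fun h ↦ (hx 0).ne' (congrFun h 0), hCx⟩
  · refine inv_lt_of_isRoot_charpoly_submatrix hB hBC hρ hx hBx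
      Fin.succAbove_right_injective (Fin.range_succAbove k) hμ ?_
    rwa [submatrix_diagonal_mul_mul_diagonal,
      charpoly_diagonal_mul_mul_diagonal (d := d ∘ k.succAbove) fun _ ↦ hd _]

lemma lval_le_of_isRoot {m : ℕ} {B : Matrix (Fin m) (Fin m) ℝ} {t : ℝ}
    (ht : B.charpoly.IsRoot t) : lval B ≤ t :=
  sInf_le (Set.mem_insert_of_mem _ ⟨t, ht, rfl⟩)

lemma lt_lval_iff {m : ℕ} {B : Matrix (Fin m) (Fin m) ℝ} {b : EReal} :
    b < lval B ↔ b < ⊤ ∧ ∀ t : ℝ, B.charpoly.IsRoot t → b < t := by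
  have hfin : {t : ℝ | B.charpoly.IsRoot t}.Finite :=
    Polynomial.finite_setOfPred_isRoot B.charpoly_monic.ne_zero
  rw [lval, ((hfin.image _).insert _).lt_csInf_iff (Set.insert_nonempty _ _)]
  simp

section Subsets

lemma orderEmbOfFin_map_univ {α : Type*} [LinearOrder α] {m : ℕ} (e : Fin m ↪o α)
    (h : (Finset.univ.map e.toEmbedding).card = m) :
    (Finset.univ.map e.toEmbedding).orderEmbOfFin h = e :=
  (Finset.orderEmbOfFin_unique' h fun i ↦ by simp).symm

lemma map_univ_erase {α : Type*} [LinearOrder α] {m : ℕ} (e : Fin (m + 1) ↪o α)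
    (i : Fin (m + 1)) :
    (Finset.univ.map e.toEmbedding).erase (e i) =
      Finset.univ.map (i.succAboveOrderEmb.trans e).toEmbedding := by
  rw [← e.coe_toEmbedding, ← Finset.map_erase, Fin.univ_succAbove _ i, Finset.erase_cons,
    Finset.map_map]
  rfl

variable {m n : ℕ} (A : Matrix (Fin n) (Fin n) ℝ)

lemma minorOn_map_univ (e f : Fin m ↪o Fin n) :
    minorOn A (Finset.univ.map e.toEmbedding) (Finset.univ.map f.toEmbedding) =
      (A.submatrix e f).det := by
  have minorOn_eq : ∀ (α β : Finset (Fin n)) (hα : α.card = m) (hβ : β.card = m),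
      minorOn A α β = (A.submatrix (α.orderEmbOfFin hα) (β.orderEmbOfFin hβ)).det := by
    rintro α β rfl hβ
    exact dif_pos hβ
  rw [minorOn_eq _ _ (by simp) (by simp), orderEmbOfFin_map_univ, orderEmbOfFin_map_univ]

lemma lval_psub_map_univ (e : Fin m ↪o Fin n) :
    lval (psub A (Finset.univ.map e.toEmbedding)) = lval (A.submatrix e e) := by
  have lval_psub_eq : ∀ (α : Finset (Fin n)) (hα : α.card = m),
      lval (psub A α) = lval (A.submatrix (α.orderEmbOfFin hα) (α.orderEmbOfFin hα)) := by
    rintro α rfl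
    rfl
  rw [lval_psub_eq _ (by simp), orderEmbOfFin_map_univ]

variable {A}

lemma IsSK.det_submatrix_pos (hA : IsSK A) {κ : Type*} [Fintype κ] [DecidableEq κ]
    {f : κ → Fin n} (hf : Function.Injective f) : 0 < (A.submatrix f f).det := by
  cases isEmpty_or_nonempty κ
  · simp
  set α : Finset (Fin n) := Finset.univ.map ⟨f, hf⟩
  let toImage : κ ≃ α := (Equiv.ofInjective f hf).trans (Equiv.setCongr (by simp [α]))
  let σ : κ ≃ Fin α.card := toImage.trans (α.orderIsoOfFin rfl).symm.toEquiv
  have hσ : α.orderEmbOfFin rfl ∘ σ = f :=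
    funext fun i ↦ congrArg Subtype.val ((α.orderIsoOfFin rfl).apply_symm_apply (toImage i))
  have hminor : minorOn A α α = (A.submatrix f f).det := by
    rw [minorOn, dif_pos rfl, ← det_submatrix_equiv_self σ, submatrix_submatrix, hσ]
  exact hminor ▸ hA.1 α (by simp [α])

lemma IsSK.det_submatrix_succAbove_pos (hA : IsSK A) (e : Fin (m + 1) ↪o Fin n)
    (i j : Fin (m + 1)) :
    0 < (A.submatrix (e ∘ i.succAbove) (e ∘ j.succAbove)).det := by
  obtain rfl | hij := eq_or_ne i j
  · exact hA.det_submatrix_pos (e.injective.comp Fin.succAbove_right_injective)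
  · have hminor := hA.2 (Finset.univ.map e.toEmbedding) (e i) (e j) (by simp) (by simp)
      (e.injective.ne hij)
    rwa [map_univ_erase, map_univ_erase, minorOn_map_univ] at hminor

lemma IsSK.isRoot_charpoly_submatrix_pos (hA : IsSK A) {κ : Type*} [Fintype κ] [DecidableEq κ]
    {f : κ → Fin n} (hf : Function.Injective f) {t : ℝ}
    (ht : (A.submatrix f f).charpoly.IsRoot t) : 0 < t :=
  pos_of_isRoot_charpoly (A := A.submatrix f f)
    (fun _ ↦ hA.det_submatrix_pos (hf.comp Subtype.val_injective)) ht

lemma IsSK.lval_submatrix_lt_lval_submatrix_succAbove (hA : IsSK A) (e : Fin (m + 1) ↪o Fin n)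
    (k : Fin (m + 1)) :
    lval (A.submatrix e e) < lval (A.submatrix (e ∘ k.succAbove) (e ∘ k.succAbove)) := by
  obtain ⟨t, ht, hlt⟩ := exists_isRoot_charpoly_lt_of_minors_pos
    (hA.det_submatrix_pos e.injective) (hA.det_submatrix_succAbove_pos e)
  have hinj : Function.Injective (e ∘ k.succAbove) :=
    e.injective.comp Fin.succAbove_right_injective
  refine (lval_le_of_isRoot ht).trans_lt (lt_lval_iff.2 ⟨EReal.coe_lt_top t, fun μ hμ ↦ ?_⟩)
  exact EReal.coe_lt_coe (hlt k μ (hA.isRoot_charpoly_submatrix_pos hinj hμ) hμ)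

theorem IsSK.strictAnti_lval_psub (hA : IsSK A) : StrictAnti fun α ↦ lval (psub A α) := by
  refine (strictAnti_iff_forall_covBy _).2 fun β α hβα ↦ ?_
  obtain ⟨a, ha, rfl⟩ := Finset.covBy_iff_exists_erase.1 hβα
  obtain ⟨m, hm⟩ := Nat.exists_eq_succ_of_ne_zero (Finset.card_ne_zero_of_mem ha)
  obtain ⟨e, rfl⟩ : ∃ e : Fin (m + 1) ↪o Fin n, Finset.univ.map e.toEmbedding = α :=
    ⟨α.orderEmbOfFin hm, α.map_orderEmbOfFin_univ hm⟩
  obtain ⟨k, -, rfl⟩ := Finset.mem_map.1 ha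
  have herase := map_univ_erase e k
  simp only [RelEmbedding.coe_toEmbedding] at herase ⊢
  rw [herase, lval_psub_map_univ, lval_psub_map_univ]
  exact hA.lval_submatrix_lt_lval_submatrix_succAbove e k

end Subsets

/-- Every SK-matrix is a strict τ-matrix (τ^<-matrix):
`l(A) > 0`, every principal submatrix of `A` has a real eigenvalue, and
`l(A(α)) < l(A(β)) < ∞` whenever `∅ ≠ β ⊊ α ⊆ {1,…,n}`. -/
theorem sk_is_strict_tau {n : ℕ} (A : Matrix (Fin n) (Fin n) ℝ) (hA : IsSK A) :
    (0 : EReal) < lval A ∧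
    (∀ α : Finset (Fin n), α.Nonempty → lval (psub A α) < ⊤) ∧
    (∀ α β : Finset (Fin n), β.Nonempty → β ⊂ α →
      lval (psub A α) < lval (psub A β) ∧ lval (psub A β) < ⊤) := by
  have hanti := hA.strictAnti_lval_psub
  have hlt_top {α : Finset (Fin n)} (hα : α.Nonempty) : lval (psub A α) < ⊤ :=
    (hanti (Finset.empty_ssubset.2 hα)).trans_le le_top
  refine ⟨?_, fun _ ↦ hlt_top, fun _ _ hβ hβα ↦ ⟨hanti hβα, hlt_top hβ⟩⟩
  exact lt_lval_iff.2 ⟨EReal.zero_lt_top, fun t ht ↦ EReal.coe_pos.2 <|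
    hA.isRoot_charpoly_submatrix_pos Function.injective_id ht⟩
end

section
/- Let A be an n×n SK-matrix with eigenvalues λ_1 > λ_2 > … > λ_n > 0 (all positive and simple), and let r = 1 or r = n. If μ^(r)_1 > μ^(r)_2 > … > μ^(r)_{n−1} > 0 are the eigenvalues of the principal submatrix A_r of A obtained by deleting the r-th row and the r-th column, then λ_j > μ_j^(r) > λ_{j+1} for all j = 1, …, n−1. -/
open Matrix

/-!
Delete the first or the last row and column, or both, from `x - A` and apply the Desnanot–Jacobi
identity: the four characteristic polynomials so obtained satisfy
`χ(x) χ_inner(x) = χ_first(x) χ_last(x) - c₁(x) c₂(x)`,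
where `c₁` and `c₂` are the two corner minors of `x - A`, up to a common sign those of `A - x`.
Subtracting a nonnegative number from a diagonal entry of `A` adds a
nonnegative multiple of a smaller corner minor to each corner minor, so `c₁(x) c₂(x) > 0` for
`x ≥ 0`, and `χ(μ) χ_inner(μ) < 0` at every positive zero `μ` of `χ_first` or `χ_last`.

By induction the zeros of `χ_inner` interlace those of `χ_first` (or of `χ_last`), hence `χ`
alternates in sign along the latter, and the intermediate value theorem places a zero of `χ` in
each gap and beyond both ends. Positivity of the principal minors is what keeps the zeros of the
proper principal submatrices in the range `x ≥ 0`.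
-/

open Polynomial

section CommRing

variable {R : Type*} [CommRing R]

theorem submatrix_single {ι ι' κ κ' : Type*} [DecidableEq ι] [DecidableEq ι'] [DecidableEq κ]
    [DecidableEq κ'] {f : κ → ι} {g : κ' → ι'} (hf : Function.Injective f)
    (hg : Function.Injective g) (a : κ) (b : κ') (c : R) :
    (single (f a) (g b) c).submatrix f g = single a b c := by
  ext x y
  simp [single_apply, hf.eq_iff, hg.eq_iff]

theorem det_sub_single {ι : Type*} [Fintype ι] [DecidableEq ι] (M : Matrix ι ι R) (i j : ι)
    (c : R) : (M - single i j c).det = M.det - c * M.adjugate j i := by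
  have hrow : M - single i j c = M.updateRow i (M i + -c • Pi.single j 1) := by
    ext x y
    obtain rfl | hx := eq_or_ne x i
    · obtain rfl | hy := eq_or_ne y j <;> simp [*, Ne.symm, sub_eq_add_neg]
    · simp [hx, hx.symm]
  rw [hrow, det_updateRow_add, updateRow_eq_self, det_updateRow_smul, ← adjugate_apply, neg_mul,
    sub_eq_add_neg]

theorem det_updateCol_single_self {n : ℕ} (M : Matrix (Fin (n + 1)) (Fin (n + 1)) R)
    (k : Fin (n + 1)) :
    (M.updateCol k (Pi.single k 1)).det = (M.submatrix k.succAbove k.succAbove).det := by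
  rw [← cramer_apply, cramer_eq_adjugate_mulVec, mulVec_single_one, col_apply,
    adjugate_fin_succ_eq_det_submatrix, Even.neg_one_pow (Even.add_self (k : ℕ)), one_mul]

section Cramer

variable {ι : Type*} [Fintype ι] [DecidableEq ι] {i j : ι}

theorem det_updateCol_updateCol_one (hij : i ≠ j) (u v : ι → R) :
    (((1 : Matrix ι ι R).updateCol i u).updateCol j v).det = u i * v j - v i * u j := by
  have hlow : ((1 : Matrix ι ι R).updateCol i u).updateCol j v =
      1 + (of ![u - Pi.single i 1, v - Pi.single j 1])ᵀ *
        (of ![Pi.single i 1, Pi.single j 1] : Matrix (Fin 2) ι R) := by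
    ext x y
    obtain rfl | hyj := eq_or_ne y j
    · simp [mul_apply, hij, one_apply, Pi.single_apply]
    · obtain rfl | hyi := eq_or_ne y i
      · simp [mul_apply, hij, one_apply, Pi.single_apply]
      · simp [mul_apply, hyi, hyj]
  rw [hlow, det_one_add_mul_comm, det_fin_two]
  simp [hij, hij.symm]

theorem det_mul_det_updateCol_updateCol_of_isRegular {M : Matrix ι ι R} (hM : IsRegular M.det)
    (hij : i ≠ j) (u v : ι → R) :
    M.det * ((M.updateCol i u).updateCol j v).det =
      cramer M u i * cramer M v j - cramer M v i * cramer M u j := by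
  apply hM.left
  calc M.det * (M.det * ((M.updateCol i u).updateCol j v).det)
      = ((M.updateCol i (M.det • u)).updateCol j (M.det • v)).det := by
        rw [det_updateCol_smul, updateCol_comm _ hij (M.det • u), det_updateCol_smul,
          updateCol_comm _ hij.symm]
    _ = (M * ((1 : Matrix ι ι R).updateCol i (cramer M u)).updateCol j (cramer M v)).det := by
        rw [mul_updateCol, mul_updateCol, mul_one, mulVec_cramer, mulVec_cramer]
    _ = _ := by rw [det_mul, det_updateCol_updateCol_one hij]

theorem det_mul_det_updateCol_updateCol (M : Matrix ι ι R) (hij : i ≠ j) (u v : ι → R) :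
    M.det * ((M.updateCol i u).updateCol j v).det =
      cramer M u i * cramer M v j - cramer M v i * cramer M u j := by
  -- The generic perturbation `X • 1 + M` has a monic, hence regular, determinant.
  let N : Matrix ι ι R[X] := (X : R[X]) • (1 : Matrix ι ι R[X]) + M.map C
  have hN : IsRegular N.det := Monic.isRegular (leadingCoeff_det_X_one_add_C M)
  have heval : N.map (evalRingHom 0) = M := by ext; simp [N]
  have hC : ∀ w : ι → R, (evalRingHom (0 : R)) ∘ (C ∘ w) = w := fun w => by ext; simp
  have h := congrArg (evalRingHom (0 : R))
    (det_mul_det_updateCol_updateCol_of_isRegular hN hij (C ∘ u) (C ∘ v))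
  simpa only [map_mul, map_sub, cramer_apply, RingHom.map_det, RingHom.mapMatrix_apply,
    map_updateCol, heval, hC] using h

end Cramer

/-- The almost principal minor of `M` whose deleted row is the first and deleted column the last.
Its mirror image, with the last row and the first column deleted, is `cornerMinor Mᵀ`. -/
def cornerMinor {n : ℕ} (M : Matrix (Fin (n + 1)) (Fin (n + 1)) R) : R :=
  (M.submatrix Fin.succ Fin.castSucc).det

theorem cornerMinor_transpose {n : ℕ} (M : Matrix (Fin (n + 1)) (Fin (n + 1)) R) :
    cornerMinor Mᵀ = (M.submatrix Fin.castSucc Fin.succ).det := by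
  rw [cornerMinor, ← transpose_submatrix, det_transpose]

theorem cornerMinor_neg {n : ℕ} (M : Matrix (Fin (n + 1)) (Fin (n + 1)) R) :
    cornerMinor (-M) = (-1) ^ n * cornerMinor M := by
  rw [cornerMinor, submatrix_neg, Pi.neg_apply, Pi.neg_apply, det_neg, Fintype.card_fin,
    cornerMinor]

theorem desnanot_jacobi {n : ℕ} (M : Matrix (Fin (n + 2)) (Fin (n + 2)) R) :
    M.det * (M.submatrix (Fin.succ ∘ Fin.castSucc) (Fin.succ ∘ Fin.castSucc)).det =
      (M.submatrix Fin.succ Fin.succ).det * (M.submatrix Fin.castSucc Fin.castSucc).det -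
        cornerMinor M * cornerMinor Mᵀ := by
  have hne : (0 : Fin (n + 2)) ≠ Fin.last _ := Fin.last_pos.ne
  have hinner : ((M.updateCol 0 (Pi.single 0 1)).updateCol (Fin.last (n + 1))
      (Pi.single (Fin.last (n + 1)) 1)).det =
      (M.submatrix (Fin.succ ∘ Fin.castSucc) (Fin.succ ∘ Fin.castSucc)).det := by
    have hcol : (M.updateCol 0 (Pi.single 0 1)).submatrix Fin.castSucc Fin.castSucc =
        (M.submatrix Fin.castSucc Fin.castSucc).updateCol 0 (Pi.single 0 1) := by
      ext x y
      simp [updateCol_apply, Pi.single_apply]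
    rw [det_updateCol_single_self, Fin.succAbove_last, hcol, det_updateCol_single_self]
    rfl
  have h := det_mul_det_updateCol_updateCol M hne (Pi.single 0 1) (Pi.single (Fin.last _) 1)
  rw [hinner] at h
  simp only [cramer_eq_adjugate_mulVec, mulVec_single_one, col_apply,
    adjugate_fin_succ_eq_det_submatrix, Fin.succAbove_zero, Fin.succAbove_last] at h
  rw [h, cornerMinor_transpose, cornerMinor]
  have hsign : (-1 : R) ^ (n + 1) * (-1) ^ (n + 1) = 1 := by
    rw [← mul_pow, neg_mul_neg, one_mul, one_pow]
  simp only [Fin.val_zero, Fin.val_last, add_zero, zero_add, pow_zero, pow_add _ (n + 1), hsign]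
  linear_combination -(M.submatrix Fin.castSucc Fin.succ).det *
    (M.submatrix Fin.succ Fin.castSucc).det * hsign

theorem cornerMinor_sub_single_of_end {n : ℕ} (M : Matrix (Fin (n + 1)) (Fin (n + 1)) R)
    {i : Fin (n + 1)} (hi : i = 0 ∨ i = Fin.last n) (c : R) :
    cornerMinor (M - single i i c) = cornerMinor M := by
  have hzero : (single i i c).submatrix Fin.succ Fin.castSucc = 0 := by
    ext x y
    rcases hi with rfl | rfl
    · simp [(Fin.succ_ne_zero x).symm]
    · simp [(Fin.castSucc_ne_last y).symm]
  rw [cornerMinor, submatrix_sub, Pi.sub_apply, Pi.sub_apply, hzero, sub_zero, cornerMinor]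

theorem cornerMinor_sub_single {n : ℕ} (M : Matrix (Fin (n + 2)) (Fin (n + 2)) R)
    {i : Fin (n + 2)} (h0 : i ≠ 0) (hlast : i ≠ Fin.last _) (c : R) :
    cornerMinor (M - single i i c) =
      cornerMinor M + c * cornerMinor (M.submatrix i.succAbove i.succAbove) := by
  obtain ⟨a, ha⟩ := Fin.exists_succ_eq.2 h0
  obtain ⟨b, hb⟩ := Fin.exists_castSucc_eq.2 hlast
  have hba : (b : ℕ) = a + 1 := by simpa using congrArg Fin.val (hb.trans ha.symm)
  have hsingle : (single i i c).submatrix Fin.succ Fin.castSucc = single a b c := by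
    rw [← submatrix_single (Fin.succ_injective _) (Fin.castSucc_injective _) a b c,
      ha, hb]
  have hminor : (M.submatrix Fin.succ Fin.castSucc).submatrix a.succAbove b.succAbove =
      (M.submatrix i.succAbove i.succAbove).submatrix Fin.succ Fin.castSucc := by
    ext x y
    simp only [submatrix_apply]
    congr 1
    · rw [← ha, Fin.succ_succAbove_succ]
    · rw [← hb, Fin.castSucc_succAbove_castSucc]
  -- The diagonal entry `(i, i)` lands next to the diagonal, where its cofactor has sign `-1`.
  have hsign : (-1 : R) ^ ((a : ℕ) + b) = -1 := by
    rw [hba]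
    exact Odd.neg_one_pow ⟨a, by ring⟩
  rw [cornerMinor, submatrix_sub, Pi.sub_apply, Pi.sub_apply, hsingle, det_sub_single,
    adjugate_fin_succ_eq_det_submatrix, hsign, hminor, cornerMinor, cornerMinor]
  ring

theorem eval_charpoly_submatrix {ι κ : Type*} [Fintype ι] [DecidableEq ι] [Fintype κ]
    [DecidableEq κ] (A : Matrix ι ι R) {f : κ → ι} (hf : Function.Injective f) (x : R) :
    (A.submatrix f f).charpoly.eval x = ((scalar ι x - A).submatrix f f).det := by
  rw [eval_charpoly, submatrix_sub, Pi.sub_apply, Pi.sub_apply, scalar_apply, scalar_apply,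
    submatrix_diagonal _ _ hf]
  rfl

end CommRing

section Ordered

variable {R : Type*} [CommRing R] [PartialOrder R] {n : ℕ}

/-- Positivity of the corner minors of all principal submatrices of `A`: the only almost principal
minors that enter the interlacing argument. Principal submatrices are encoded by strictly monotone
maps `f`, which makes the class closed under `Matrix.submatrix` by composition. -/
def HasPosCornerMinors (A : Matrix (Fin n) (Fin n) R) : Prop :=
  ∀ ⦃k : ℕ⦄ (f : Fin (k + 1) → Fin n), StrictMono f → 0 < cornerMinor (A.submatrix f f)

/-- Positivity of all principal minors of `A`, i.e. `A` is a P-matrix, with principal submatrices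
encoded as in `HasPosCornerMinors`. -/
def HasPosPrincipalMinors (A : Matrix (Fin n) (Fin n) R) : Prop :=
  ∀ ⦃k : ℕ⦄ (f : Fin k → Fin n), StrictMono f → 0 < (A.submatrix f f).det

theorem HasPosPrincipalMinors.submatrix {A : Matrix (Fin n) (Fin n) R}
    (hA : HasPosPrincipalMinors A) {m : ℕ} {g : Fin m → Fin n} (hg : StrictMono g) :
    HasPosPrincipalMinors (A.submatrix g g) :=
  fun _ f hf => hA (g ∘ f) (hg.comp hf)

namespace HasPosCornerMinors

variable {A : Matrix (Fin n) (Fin n) R}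

theorem submatrix (hA : HasPosCornerMinors A) {m : ℕ} {g : Fin m → Fin n} (hg : StrictMono g) :
    HasPosCornerMinors (A.submatrix g g) :=
  fun _ f hf => hA (g ∘ f) (hg.comp hf)

variable [IsOrderedRing R]

theorem sub_single (hA : HasPosCornerMinors A) (i : Fin n) {c : R} (hc : 0 ≤ c) :
    HasPosCornerMinors (A - single i i c) := by
  intro k f hf
  rw [submatrix_sub, Pi.sub_apply, Pi.sub_apply]
  by_cases hi : ∃ a, f a = i
  · obtain ⟨a, rfl⟩ := hi
    rw [submatrix_single hf.injective hf.injective]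
    by_cases hend : a = 0 ∨ a = Fin.last k
    · rw [cornerMinor_sub_single_of_end _ hend]
      exact hA f hf
    obtain ⟨h0, hlast⟩ := not_or.1 hend
    obtain _ | k := k
    · exact absurd (Fin.fin_one_eq_zero a) h0
    rw [cornerMinor_sub_single _ h0 hlast]
    exact add_pos_of_pos_of_nonneg (hA f hf) (mul_nonneg hc
      (hA.submatrix hf _ (Fin.strictMono_succAbove a)).le)
  · have hzero : (single i i c).submatrix f f = 0 := by
      ext x y
      exact single_apply_of_row_ne (fun h => hi ⟨x, h.symm⟩) _ _ _
    rw [hzero, sub_zero]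
    exact hA f hf

theorem sub_diagonal (hA : HasPosCornerMinors A) {d : Fin n → R} (hd : 0 ≤ d) :
    HasPosCornerMinors (A - diagonal d) := by
  have hsum (s : Finset (Fin n)) : HasPosCornerMinors (A - ∑ i ∈ s, single i i (d i)) := by
    induction s using Finset.induction_on with
    | empty => simpa using hA
    | insert i s hi ih =>
      rw [Finset.sum_insert hi, add_comm, ← sub_sub]
      exact ih.sub_single i (hd i)
  rw [← sum_single_eq_diagonal]
  exact hsum _

end HasPosCornerMinors

theorem charpoly_eval_mul_lt [IsStrictOrderedRing R] {A : Matrix (Fin (n + 2)) (Fin (n + 2)) R}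
    (hA : HasPosCornerMinors A) (hAt : HasPosCornerMinors Aᵀ) {x : R} (hx : 0 ≤ x) :
    A.charpoly.eval x *
        (A.submatrix (Fin.succ ∘ Fin.castSucc) (Fin.succ ∘ Fin.castSucc)).charpoly.eval x <
      (A.submatrix Fin.succ Fin.succ).charpoly.eval x *
        (A.submatrix Fin.castSucc Fin.castSucc).charpoly.eval x := by
  have hd : (0 : Fin (n + 2) → R) ≤ fun _ => x := fun _ => hx
  have hlow : 0 < cornerMinor (A - diagonal fun _ => x) :=
    hA.sub_diagonal hd id strictMono_id
  have hup : 0 < cornerMinor (Aᵀ - diagonal fun _ => x) :=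
    hAt.sub_diagonal hd id strictMono_id
  have hprod : 0 < cornerMinor (scalar _ x - A) * cornerMinor (scalar _ x - A)ᵀ := by
    rw [← neg_sub A, transpose_neg, transpose_sub, scalar_apply, diagonal_transpose,
      cornerMinor_neg, cornerMinor_neg, mul_mul_mul_comm, ← mul_pow, neg_mul_neg, one_mul, one_pow,
      one_mul]
    exact mul_pos hlow hup
  have hsucc := Fin.succ_injective (n + 1)
  have hcast := Fin.castSucc_injective (n + 1)
  rw [eval_charpoly, eval_charpoly_submatrix A hsucc, eval_charpoly_submatrix A hcast,
    eval_charpoly_submatrix A ((Fin.succ_injective _).comp (Fin.castSucc_injective _)),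
    desnanot_jacobi]
  exact sub_lt_self _ hprod

end Ordered

section Interlaces

variable {α : Type*} [Preorder α] {m : ℕ}

/-- Strict interlacing `lam 0 > mu 0 > lam 1 > ⋯ > mu (m - 1) > lam m` of two decreasing lists. -/
def Interlaces (lam : Fin (m + 1) → α) (mu : Fin m → α) : Prop :=
  ∀ j : Fin m, mu j < lam j.castSucc ∧ lam j.succ < mu j

namespace Interlaces

theorem strictAnti_left {lam : Fin (m + 1) → α} {mu : Fin m → α} (h : Interlaces lam mu) :
    StrictAnti lam :=
  Fin.strictAnti_iff_succ_lt.2 fun j => (h j).2.trans (h j).1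

theorem strictAnti_right {lam : Fin (m + 1) → α} {mu : Fin m → α} (h : Interlaces lam mu) :
    StrictAnti mu := fun i j hij =>
  (h j).1.trans_le ((h.strictAnti_left.antitone (Fin.succ_le_castSucc_iff.2 hij)).trans (h i).2.le)

theorem neg_one_pow_mul_prod_sub_pos {R : Type*} [CommRing R] [LinearOrder R]
    [IsStrictOrderedRing R] {lam : Fin (m + 1) → R} {mu : Fin m → R} (h : Interlaces lam mu)
    (j : Fin (m + 1)) : 0 < (-1) ^ (j : ℕ) * ∏ i, (lam j - mu i) := by
  have hsign : (-1 : R) ^ (j : ℕ) = ∏ i : Fin m, if i.castSucc < j then -1 else 1 := by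
    have hcard := Fin.card_filter_val_lt (n := m) (m := j)
    rw [min_eq_right (Nat.lt_succ_iff.1 j.2)] at hcard
    simp [Finset.prod_ite, Fin.lt_def, hcard]
  rw [hsign, ← Finset.prod_mul_distrib]
  refine Finset.prod_pos fun i _ => ?_
  split_ifs with hij
  · have hle : lam j ≤ lam i.succ := h.strictAnti_left.antitone (Fin.castSucc_lt_iff_succ_le.1 hij)
    linarith [(h i).2]
  · have hle : lam i.castSucc ≤ lam j := h.strictAnti_left.antitone (not_lt.1 hij)
    linarith [(h i).1]

end Interlaces

theorem strictAnti_snoc {f : Fin m → α} (hf : StrictAnti f) {a : α} (ha : ∀ i, a < f i) :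
    StrictAnti (Fin.snoc f a : Fin (m + 1) → α) := by
  intro i j hij
  obtain ⟨i, rfl⟩ := Fin.exists_castSucc_eq.2 (Fin.ne_last_of_lt hij)
  cases j using Fin.lastCases with
  | last => simpa using ha i
  | cast j => simpa using hf (Fin.castSucc_lt_castSucc_iff.1 hij)

theorem exists_interlaces_zeros_of_alternating {f : ℝ → ℝ} (hf : Continuous f)
    {e : Fin (m + 1) → ℝ} (he : Antitone e)
    (hsign : ∀ i : Fin (m + 1), 0 < (-1) ^ (i : ℕ) * f (e i)) :
    ∃ z : Fin m → ℝ, Interlaces e z ∧ ∀ i, f (z i) = 0 := by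
  have hzero (i : Fin m) : ∃ z, (z < e i.castSucc ∧ e i.succ < z) ∧ f z = 0 := by
    have hupper := hsign i.castSucc
    have hlower := hsign i.succ
    rw [Fin.val_castSucc] at hupper
    rw [Fin.val_succ, pow_succ] at hlower
    obtain ⟨z, ⟨hlt, hgt⟩, hz⟩ := intermediate_value_Ioo (he i.castSucc_lt_succ.le)
      (hf.const_mul ((-1) ^ (i : ℕ))).continuousOn ⟨by linarith, hupper⟩
    exact ⟨z, ⟨hgt, hlt⟩, by simpa using hz⟩
  choose z hinter hz using hzero
  exact ⟨z, hinter, hz⟩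

theorem eq_prod_X_sub_C_of_monic {K : Type*} [CommRing K] [IsDomain K] {p : K[X]} (hp : p.Monic)
    (hdeg : p.natDegree = m) {z : Fin m → K} (hinj : Function.Injective z)
    (hz : ∀ i, p.eval (z i) = 0) : p = ∏ i, (X - C (z i)) := by
  have hmonic : (∏ i, (X - C (z i))).Monic := monic_prod_X_sub_C z Finset.univ
  have hdeg' : p.degree = (∏ i, (X - C (z i))).degree := by
    simp [degree_eq_natDegree hp.ne_zero, hdeg, degree_prod]
  refine eq_of_degree_le_of_eval_index_eq (v := z) Finset.univ hinj.injOn ?_ hdeg'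
    (hp.leadingCoeff.trans hmonic.leadingCoeff.symm) fun i hi => ?_
  · simp [degree_eq_natDegree hp.ne_zero, hdeg]
  · rw [hz, eval_prod, Finset.prod_eq_zero hi (by simp)]

theorem exists_interlaces_roots {p : ℝ[X]} (hp : p.Monic) (hdeg : p.natDegree = m + 1)
    {mu : Fin m → ℝ} (hmu : StrictAnti mu) {c : ℝ} (hc : ∀ i, c < mu i)
    (hsign : ∀ j : Fin m, 0 < (-1) ^ ((j : ℕ) + 1) * p.eval (mu j))
    (hsign_c : 0 < (-1) ^ (m + 1) * p.eval c) :
    ∃ lam : Fin (m + 1) → ℝ, (∀ i, c < lam i) ∧ p = ∏ i, (X - C (lam i)) ∧ Interlaces lam mu := by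
  have htop : Filter.Tendsto (fun x => p.eval x) Filter.atTop Filter.atTop :=
    p.tendsto_atTop_of_leadingCoeff_nonneg (natDegree_pos_iff_degree_pos.1 (by lia))
      (by simp [hp.leadingCoeff])
  obtain ⟨B, hB, hcB, hmuB⟩ := ((htop.eventually_gt_atTop 0).and
    ((Filter.eventually_gt_atTop c).and
      (Filter.eventually_all.2 fun i => Filter.eventually_gt_atTop (mu i)))).exists
  let e : Fin (m + 2) → ℝ := Fin.cons B (Fin.snoc mu c)
  have he_mu (j : Fin m) : e j.castSucc.succ = mu j := by simp [e]
  have he_last : e (Fin.last (m + 1)) = c := by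
    rw [← Fin.succ_last]
    simp [e]
  have he_anti : StrictAnti e := by
    refine strictAnti_vecCons.2 ⟨?_, strictAnti_snoc hmu hc⟩
    cases m <;> simp [Fin.snoc, hcB, hmuB]
  have he_sign (i : Fin (m + 2)) : 0 < (-1) ^ (i : ℕ) * p.eval (e i) := by
    cases i using Fin.cases with
    | zero => simpa [e] using hB
    | succ i =>
      cases i using Fin.lastCases with
      | last => simpa [he_last] using hsign_c
      | cast j => simpa [he_mu] using hsign j
  obtain ⟨lam, hinter, hroot⟩ := exists_interlaces_zeros_of_alternating p.continuous
    he_anti.antitone he_sign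
  have hanti := hinter.strictAnti_right
  refine ⟨lam, fun i => ?_, eq_prod_X_sub_C_of_monic hp hdeg hanti.injective hroot,
    fun j => ⟨?_, ?_⟩⟩
  · exact he_last ▸ (hinter (Fin.last m)).2.trans_le (hanti.antitone (Fin.le_last i))
  · exact he_mu j ▸ (hinter j.castSucc).2
  · exact he_mu j ▸ (hinter j.succ).1

end Interlaces

section IsSK

variable {n : ℕ} {A : Matrix (Fin n) (Fin n) ℝ}

theorem image_comp_succAbove {α : Type*} [DecidableEq α] {k : ℕ} {f : Fin (k + 1) → α}
    (hf : Function.Injective f) (r : Fin (k + 1)) :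
    Finset.univ.image (f ∘ r.succAbove) = (Finset.univ.image f).erase (f r) := by
  rw [← Finset.image_image, Fin.image_succAbove_univ, ← Finset.image_erase hf,
    ← Finset.sdiff_singleton_eq_erase, Finset.compl_eq_univ_sdiff]

theorem minorOn_image (A : Matrix (Fin n) (Fin n) ℝ) {k : ℕ} {f g : Fin k → Fin n}
    (hf : StrictMono f) (hg : StrictMono g) :
    minorOn A (Finset.univ.image f) (Finset.univ.image g) = (A.submatrix f g).det := by
  have hcard {h : Fin k → Fin n} (hh : StrictMono h) : (Finset.univ.image h).card = k := by
    rw [Finset.card_image_of_injective _ hh.injective, Finset.card_fin]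
  have hemb {h : Fin k → Fin n} (hh : StrictMono h) {l : ℕ} (hl : l = k)
      (hc : (Finset.univ.image h).card = l) :
      ⇑((Finset.univ.image h).orderEmbOfFin hc) = h ∘ finCongr hl := by
    subst hl
    exact (Finset.orderEmbOfFin_unique hc
      (fun x => Finset.mem_image_of_mem h (Finset.mem_univ x)) hh).symm
  rw [minorOn, dif_pos ((hcard hg).trans (hcard hf).symm), hemb hf (hcard hf),
    hemb hg (hcard hf), ← submatrix_submatrix, det_submatrix_equiv_self]

namespace IsSK

theorem hasPosPrincipalMinors (hA : IsSK A) : HasPosPrincipalMinors A := by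
  intro k f hf
  obtain _ | k := k
  · simp
  rw [← minorOn_image A hf hf]
  exact hA.1 _ (Finset.univ_nonempty.image f)

theorem det_submatrix_comp_succAbove_pos (hA : IsSK A) {k : ℕ} {f : Fin (k + 1) → Fin n}
    (hf : StrictMono f) {r s : Fin (k + 1)} (hrs : r ≠ s) :
    0 < (A.submatrix (f ∘ r.succAbove) (f ∘ s.succAbove)).det := by
  have hmem (t : Fin (k + 1)) : f t ∈ Finset.univ.image f :=
    Finset.mem_image_of_mem f (Finset.mem_univ t)
  rw [← minorOn_image A (hf.comp r.strictMono_succAbove) (hf.comp s.strictMono_succAbove),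
    image_comp_succAbove hf.injective, image_comp_succAbove hf.injective]
  exact hA.2 _ _ _ (hmem r) (hmem s) (hf.injective.ne hrs)

theorem hasPosCornerMinors (hA : IsSK A) : HasPosCornerMinors A := by
  intro k f hf
  obtain _ | k := k
  · simp [cornerMinor]
  rw [cornerMinor, submatrix_submatrix, ← Fin.succAbove_zero, ← Fin.succAbove_last]
  exact hA.det_submatrix_comp_succAbove_pos hf Fin.last_pos.ne

theorem hasPosCornerMinors_transpose (hA : IsSK A) : HasPosCornerMinors Aᵀ := by
  intro k f hf
  obtain _ | k := k
  · simp [cornerMinor]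
  rw [← transpose_submatrix, cornerMinor_transpose, submatrix_submatrix, ← Fin.succAbove_zero,
    ← Fin.succAbove_last]
  exact hA.det_submatrix_comp_succAbove_pos hf Fin.last_pos.ne'

end IsSK

end IsSK

section Main

variable {n : ℕ}

theorem HasPosPrincipalMinors.neg_one_pow_mul_charpoly_eval_zero_pos {R : Type*} [CommRing R]
    [PartialOrder R] {A : Matrix (Fin n) (Fin n) R} (hA : HasPosPrincipalMinors A) :
    0 < (-1) ^ n * A.charpoly.eval 0 := by
  have hdet := hA id strictMono_id
  rwa [submatrix_id_id, det_eq_sign_charpoly_coeff, Fintype.card_fin, coeff_zero_eq_eval_zero]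
    at hdet

theorem exists_succAbove_comp_succAbove_eq {k : Fin (n + 2)} (hk : k = 0 ∨ k = Fin.last (n + 1)) :
    ∃ l, (l = 0 ∨ l = Fin.last n) ∧ k.succAbove ∘ l.succAbove = Fin.succ ∘ Fin.castSucc := by
  rcases hk with rfl | rfl
  · exact ⟨Fin.last n, .inr rfl, by rw [Fin.succAbove_zero, Fin.succAbove_last]⟩
  · exact ⟨0, .inl rfl, by rw [Fin.succAbove_zero, Fin.succAbove_last]; rfl⟩

theorem neg_one_pow_mul_charpoly_eval_pos {R : Type*} [CommRing R] [LinearOrder R]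
    [IsStrictOrderedRing R] {A : Matrix (Fin (n + 2)) (Fin (n + 2)) R}
    (hA : HasPosCornerMinors A) (hAt : HasPosCornerMinors Aᵀ)
    {k : Fin (n + 2)} (hk : k = 0 ∨ k = Fin.last (n + 1)) {mu : Fin (n + 1) → R} {nu : Fin n → R}
    (hmu : (A.submatrix k.succAbove k.succAbove).charpoly = ∏ i, (X - C (mu i)))
    (hnu : (A.submatrix (Fin.succ ∘ Fin.castSucc) (Fin.succ ∘ Fin.castSucc)).charpoly =
      ∏ i, (X - C (nu i)))
    (h : Interlaces mu nu) {j : Fin (n + 1)} (hj : 0 ≤ mu j) :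
    0 < (-1) ^ ((j : ℕ) + 1) * A.charpoly.eval (mu j) := by
  have hroot : (A.submatrix k.succAbove k.succAbove).charpoly.eval (mu j) = 0 := by
    rw [hmu, eval_prod, Finset.prod_eq_zero (Finset.mem_univ j) (by simp)]
  have hends : (A.submatrix Fin.succ Fin.succ).charpoly.eval (mu j) *
      (A.submatrix Fin.castSucc Fin.castSucc).charpoly.eval (mu j) = 0 := by
    rcases hk with rfl | rfl
    · rw [← Fin.succAbove_zero, hroot, zero_mul]
    · rw [← Fin.succAbove_last, hroot, mul_zero]
  have hneg := charpoly_eval_mul_lt hA hAt hj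
  have hinner : 0 < (-1) ^ (j : ℕ) * ∏ i, (mu j - nu i) := h.neg_one_pow_mul_prod_sub_pos j
  rw [hends, hnu, eval_prod] at hneg
  simp only [eval_sub, eval_X, eval_C] at hneg
  refine pos_of_mul_pos_left ?_ hinner.le
  have hsign : (-1 : R) ^ (j : ℕ) * (-1) ^ (j : ℕ) = 1 := by
    rw [← mul_pow, neg_mul_neg, one_mul, one_pow]
  linear_combination hneg + A.charpoly.eval (mu j) * (∏ i, (mu j - nu i)) * hsign

theorem exists_charpoly_submatrix_eq_prod {A : Matrix (Fin (n + 1)) (Fin (n + 1)) ℝ}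
    (hA : HasPosCornerMinors A) (hAt : HasPosCornerMinors Aᵀ) {k : Fin (n + 1)}
    (hk : k = 0 ∨ k = Fin.last n)
    (hP : HasPosPrincipalMinors (A.submatrix k.succAbove k.succAbove)) :
    ∃ mu : Fin n → ℝ, StrictAnti mu ∧ (∀ i, 0 < mu i) ∧
      (A.submatrix k.succAbove k.succAbove).charpoly = ∏ i, (X - C (mu i)) ∧
      ∀ j : Fin n, 0 < (-1) ^ ((j : ℕ) + 1) * A.charpoly.eval (mu j) := by
  induction n with
  | zero => exact ⟨Fin.elim0, Subsingleton.strictAnti _, by simp, by simp [charpoly], by simp⟩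
  | succ n ih =>
    have hmono := k.strictMono_succAbove
    obtain ⟨l, hl, hinner⟩ := exists_succAbove_comp_succAbove_eq hk
    obtain ⟨nu, hnu, hnu_pos, hnu_prod, hnu_sign⟩ := ih (hA.submatrix hmono) (hAt.submatrix hmono)
      hl (hP.submatrix l.strictMono_succAbove)
    rw [submatrix_submatrix, hinner] at hnu_prod
    obtain ⟨mu, hmu_pos, hmu_prod, hinter⟩ := exists_interlaces_roots (charpoly_monic _) (by simp)
      hnu hnu_pos hnu_sign hP.neg_one_pow_mul_charpoly_eval_zero_pos
    exact ⟨mu, hinter.strictAnti_left, hmu_pos, hmu_prod, fun j =>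
      neg_one_pow_mul_charpoly_eval_pos hA hAt hk hmu_prod hnu_prod hinter (hmu_pos j).le⟩

theorem eventually_atBot_neg_one_pow_mul_eval_pos {p : ℝ[X]} (hp : p.Monic) (hdeg : 0 < p.degree) :
    ∀ᶠ x in Filter.atBot, 0 < (-1) ^ p.natDegree * p.eval x := by
  have hmonic := hp.neg_one_pow_natDegree_mul_comp_neg_X
  have hdeg' : 0 < ((-1) ^ p.natDegree * p.comp (-X)).degree := by simpa using hdeg
  have htop := tendsto_atTop_of_leadingCoeff_nonneg _ hdeg' (hmonic.symm ▸ zero_le_one)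
  filter_upwards [(htop.comp Filter.tendsto_neg_atBot_atTop).eventually_gt_atTop 0] with x hx
  simpa using hx

theorem eq_of_antitone_of_map_univ_val_eq {α : Type*} [PartialOrder α] {a b : Fin n → α}
    (ha : Antitone a) (hb : Antitone b)
    (h : Finset.univ.val.map a = Finset.univ.val.map b) : a = b := by
  rw [Fin.univ_val_map, Fin.univ_val_map, Multiset.coe_eq_coe] at h
  exact List.ofFn_injective (h.eq_of_sortedGE ha.sortedGE_ofFn hb.sortedGE_ofFn)

theorem eq_of_roots_map_eq {K L : Type*} [Field K] [PartialOrder K] [CommRing L] [IsDomain L]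
    (φ : K →+* L) {p : K[X]} {a b : Fin n → K} (ha : Antitone a) (hb : Antitone b)
    (hp : p = ∏ i, (X - C (b i)))
    (hroots : (p.map φ).roots = Finset.univ.val.map fun i => φ (a i)) : a = b := by
  have hb_roots : (p.map φ).roots = Finset.univ.val.map fun i => φ (b i) := by
    rw [hp, Polynomial.map_prod, ← roots_multiset_prod_X_sub_C (Finset.univ.val.map _)]
    simp [Finset.prod_eq_multiset_prod, Function.comp_def]
  refine eq_of_antitone_of_map_univ_val_eq ha hb (Multiset.map_injective φ.injective ?_)
  rw [Multiset.map_map, Multiset.map_map]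
  exact hroots.symm.trans hb_roots

theorem sk_interlacing_general {A : Matrix (Fin (n + 1)) (Fin (n + 1)) ℝ}
    (hA : HasPosCornerMinors A) (hAt : HasPosCornerMinors Aᵀ) {k : Fin (n + 1)}
    (hk : k = 0 ∨ k = Fin.last n)
    (hP : HasPosPrincipalMinors (A.submatrix k.succAbove k.succAbove))
    {lam : Fin (n + 1) → ℝ} {mu : Fin n → ℝ} (hlam_anti : Antitone lam) (hmu_anti : Antitone mu)
    (hlam : (A.charpoly.map (algebraMap ℝ ℂ)).roots = Finset.univ.val.map fun i => (lam i : ℂ))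
    (hmu : ((A.submatrix k.succAbove k.succAbove).charpoly.map (algebraMap ℝ ℂ)).roots =
      Finset.univ.val.map fun i => (mu i : ℂ)) :
    Interlaces lam mu := by
  obtain ⟨mu', hmu'_anti, -, hmu'_prod, hmu'_sign⟩ := exists_charpoly_submatrix_eq_prod hA hAt hk hP
  obtain rfl : mu = mu' :=
    eq_of_roots_map_eq (algebraMap ℝ ℂ) hmu_anti hmu'_anti.antitone hmu'_prod hmu
  have hdeg : 0 < A.charpoly.degree := by
    rw [charpoly_degree_eq_dim, Fintype.card_fin]
    exact_mod_cast n.succ_pos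
  obtain ⟨c, hsign_c, hc⟩ := ((eventually_atBot_neg_one_pow_mul_eval_pos A.charpoly_monic hdeg).and
    (Filter.eventually_all.2 fun i => Filter.eventually_lt_atBot (mu i))).exists
  rw [charpoly_natDegree_eq_dim, Fintype.card_fin] at hsign_c
  obtain ⟨lam', -, hlam'_prod, hinter⟩ :=
    exists_interlaces_roots A.charpoly_monic (by simp) hmu'_anti hc hmu'_sign hsign_c
  obtain rfl : lam = lam' := eq_of_roots_map_eq (algebraMap ℝ ℂ) hlam_anti
    hinter.strictAnti_left.antitone hlam'_prod hlam
  exact hinter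

end Main

/-- Let `A` be an `(n+1)×(n+1)` SK-matrix with (simple, positive,
strictly decreasing) eigenvalues `lam 0 > lam 1 > … > lam n > 0`, let `k` correspond
to `r = 1` (`k = 0`) or `r = n` (`k = Fin.last n`), and let
`mu 0 > … > mu (n-1) > 0` be the eigenvalues of the principal submatrix `A_k`
obtained by deleting the `k`-th row and column. Then `lam j > mu j > lam (j+1)`
for all `j`. -/
theorem sk_interlacing {n : ℕ} (A : Matrix (Fin (n + 1)) (Fin (n + 1)) ℝ)
    (hA : IsSK A) (k : Fin (n + 1)) (hk : k = 0 ∨ k = Fin.last n)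
    (lam : Fin (n + 1) → ℝ) (mu : Fin n → ℝ)
    (hlam_dec : StrictAnti lam) (hlam_pos : ∀ i, 0 < lam i)
    (hmu_dec : StrictAnti mu) (hmu_pos : ∀ i, 0 < mu i)
    (hlam : (A.charpoly.map (algebraMap ℝ ℂ)).roots
      = Multiset.map (fun i => ((lam i : ℝ) : ℂ)) Finset.univ.val)
    (hmu : ((A.submatrix k.succAbove k.succAbove).charpoly.map (algebraMap ℝ ℂ)).roots
      = Multiset.map (fun i => ((mu i : ℝ) : ℂ)) Finset.univ.val) :
    ∀ j : Fin n, mu j < lam j.castSucc ∧ lam j.succ < mu j :=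
  sk_interlacing_general hA.hasPosCornerMinors hA.hasPosCornerMinors_transpose hk
    (hA.hasPosPrincipalMinors.submatrix k.strictMono_succAbove) hlam_dec.antitone hmu_dec.antitone
    hlam hmu
end
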